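/- arXiv:2412.20539 — 6 statements merged into one kernel-verified Lean document; each statement's English description precedes it below -/
import Mathlib

section
/- Let (X,d) be a finite ultrametric space with at least two points. Then the relation on X defined by x ~ y if and only if d(x,y) < diam X is an equivalence relation on X having at least two equivalence classes; consequently, any two points lying in different equivalence classes are at distance exactly diam X (i.e., the diametrical graph of X, whose edges join pairs of points at distance diam X, is a complete multipartite graph). -/
/-- A semimetric on `X`: nonnegative, symmetric, and vanishing exactly on the diagonal. -/
def IsSemimetric {X : Type*} (d : X → X → ℝ) : Prop :=
  (∀ x y, 0 ≤ d x y) ∧ (∀ x y, d x y = d y x) ∧ (∀ x y, d x y = 0 ↔ x = y)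

/-- An ultrametric on `X`: a semimetric satisfying the strong triangle inequality. -/
def IsUltrametric {X : Type*} (d : X → X → ℝ) : Prop :=
  IsSemimetric d ∧ ∀ x y z, d x y ≤ max (d x z) (d z y)

/-- The spectrum of a semimetric space: the set of values taken by the distance. -/
def spec {X : Type*} (d : X → X → ℝ) : Set ℝ := {r | ∃ x y, d x y = r}

/-- `B` is a ball of `(X,d)`: `B = {x | d x t ≤ r}` for some center `t` and radius `r ≥ 0`. -/
def IsBall {X : Type*} (d : X → X → ℝ) (B : Set X) : Prop :=
  ∃ (t : X) (r : ℝ), 0 ≤ r ∧ B = {x | d x t ≤ r}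

/-- `F : X → Y` is ball-preserving: images of balls are balls and preimages of balls are balls. -/
def IsBallPreserving {X Y : Type*} (d : X → X → ℝ) (ρ : Y → Y → ℝ) (F : X → Y) : Prop :=
  (∀ B : Set X, IsBall d B → IsBall ρ (F '' B)) ∧
  (∀ B : Set Y, IsBall ρ B → IsBall d (F ⁻¹' B))

/-- `Φ` is a weak similarity from `(X,d)` to `(Y,ρ)` with scaling function `f`:
`Φ` is a bijection and `f` is a strictly increasing bijection from `spec d` onto `spec ρ`
with `f (d x y) = ρ (Φ x) (Φ y)` for all `x y`. -/
def IsWeakSimilarity {X Y : Type*} (d : X → X → ℝ) (ρ : Y → Y → ℝ)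
    (Φ : X → Y) (f : ℝ → ℝ) : Prop :=
  Function.Bijective Φ ∧ Set.BijOn f (spec d) (spec ρ) ∧
  StrictMonoOn f (spec d) ∧ ∀ x y, f (d x y) = ρ (Φ x) (Φ y)

/-- `X` and `Y` are weakly similar: some weak similarity `Φ : X → Y` exists. -/
def WeaklySimilar {X Y : Type*} (d : X → X → ℝ) (ρ : Y → Y → ℝ) : Prop :=
  ∃ (Φ : X → Y) (f : ℝ → ℝ), IsWeakSimilarity d ρ Φ f

/-- `B₂` covers `B₁` in the ballean of `(X,d)` ordered by inclusion:
both are balls, `B₁ ⊊ B₂`, and no ball lies strictly between them.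
These covering pairs are exactly the arcs of the Hasse diagram of the ballean. -/
def BallCovers {X : Type*} (d : X → X → ℝ) (B₁ B₂ : Set X) : Prop :=
  IsBall d B₁ ∧ IsBall d B₂ ∧ B₁ ⊂ B₂ ∧
  ∀ B : Set X, IsBall d B → B₁ ⊆ B → B ⊆ B₂ → B = B₁ ∨ B = B₂

/-- The diameter of a subset `A` of a semimetric space `(X,d)`. -/
noncomputable def setDiam {X : Type*} (d : X → X → ℝ) (A : Set X) : ℝ :=
  sSup {r | ∃ x ∈ A, ∃ y ∈ A, d x y = r}

section

variable {X : Type*}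

theorem equivalence_lt_of_le_max {α : Type*} [LinearOrder α] {d : X → X → α} {r : α}
    (self_lt : ∀ x, d x x < r) (symm : ∀ x y, d x y = d y x)
    (le_max : ∀ x y z, d x y ≤ max (d x z) (d z y)) :
    Equivalence (fun x y => d x y < r) where
  refl := self_lt
  symm {x y} hxy := (symm y x).trans_lt hxy
  trans {x y z} hxy hyz := (le_max x z y).trans_lt (max_lt hxy hyz)

variable {d : X → X → ℝ} {r : ℝ}

theorem IsUltrametric.equivalence_lt (hd : IsUltrametric d) (hr : 0 < r) :
    Equivalence (fun x y => d x y < r) := by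
  obtain ⟨⟨-, symm, eq_zero_iff⟩, le_max⟩ := hd
  have self_lt (x : X) : d x x < r := ((eq_zero_iff x x).2 rfl).trans_lt hr
  exact equivalence_lt_of_le_max self_lt symm le_max

theorem IsSemimetric.pos_of_ne (hd : IsSemimetric d) {x y : X} (hxy : x ≠ y) : 0 < d x y := by
  obtain ⟨nonneg, -, eq_zero_iff⟩ := hd
  exact (nonneg x y).lt_of_ne' (mt (eq_zero_iff x y).1 hxy)

theorem IsSemimetric.pos_of_mem_upperBounds_spec (hd : IsSemimetric d) (hX : ∃ x y : X, x ≠ y)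
    (hr : r ∈ upperBounds (spec d)) : 0 < r := by
  obtain ⟨x, y, hxy⟩ := hX
  exact (hd.pos_of_ne hxy).trans_le (hr ⟨x, y, rfl⟩)

theorem not_lt_iff_eq_of_mem_upperBounds_spec (hr : r ∈ upperBounds (spec d)) (x y : X) :
    ¬ d x y < r ↔ d x y = r := by
  have hle : d x y ≤ r := hr ⟨x, y, rfl⟩
  exact hle.not_lt_iff_eq

end

theorem stmt0_general {X : Type*} (d : X → X → ℝ) (hd : IsUltrametric d)
    (hcard : ∃ x y : X, x ≠ y) (D : ℝ) (hD : IsGreatest (spec d) D) :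
    Equivalence (fun x y : X => d x y < D) ∧
    (∃ x y : X, ¬ d x y < D) ∧
    (∀ x y : X, ¬ d x y < D → d x y = D) := by
  obtain ⟨⟨a, b, hab⟩, hub⟩ := hD
  have hpos : 0 < D := hd.1.pos_of_mem_upperBounds_spec hcard hub
  have not_lt_iff_eq := not_lt_iff_eq_of_mem_upperBounds_spec hub
  exact ⟨hd.equivalence_lt hpos, ⟨a, b, (not_lt_iff_eq a b).2 hab⟩,
    fun x y => (not_lt_iff_eq x y).1⟩

/-- In a finite ultrametric space with at least two points, the relation
`x ~ y ↔ d x y < diam X` is an equivalence relation with at least two classes, and any two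
points in different classes are at distance exactly `diam X` (so the diametrical graph is
complete multipartite). -/
theorem stmt0 {X : Type*} [Finite X] (d : X → X → ℝ) (hd : IsUltrametric d)
    (hcard : ∃ x y : X, x ≠ y) (D : ℝ)
    (hD : IsGreatest (spec d) D) :
    Equivalence (fun x y : X => d x y < D) ∧
    (∃ x y : X, ¬ d x y < D) ∧
    (∀ x y : X, ¬ d x y < D → d x y = D) :=
  stmt0_general d hd hcard D hD
end

section
/- Let X be a finite nonempty ultrametric space. Then the following two statements are equivalent: (i) for every finite nonempty ultrametric space Y, if there exists a bijective ball-preserving mapping from X to Y, then X and Y are weakly similar; (ii) the balls of X containing more than one point are linearly ordered by inclusion (i.e., for any two balls B₁, B₂ of X each containing at least two points, B₁ ⊆ B₂ or B₂ ⊆ B₁). -/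
/-!
An ultrametric on a finite set is the same thing as its family of balls together with a labeling
of the balls that is strictly monotone and vanishes on singletons: the distance of two points is the
label of the smallest ball containing both, and changing the labels does not change the balls.

If the nontrivial balls form a chain, then comparing distances amounts to comparing smallest balls
by inclusion, so a ball-preserving bijection preserves the order of the distances. Conversely, a
labeling that is injective on nontrivial balls realizes as many nonzero distances as there are
nontrivial balls, whereas two incomparable nontrivial balls could also be given the same label,
which yields fewer distances; but weakly similar spaces have equally many distances.
-/

variable {X Y : Type*} {d : X → X → ℝ} {ρ : Y → Y → ℝ}

namespace IsUltrametric

lemma nonneg (hd : IsUltrametric d) (x y : X) : 0 ≤ d x y := hd.1.1 x y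

lemma comm (hd : IsUltrametric d) (x y : X) : d x y = d y x := hd.1.2.1 x y

lemma eq_zero_iff (hd : IsUltrametric d) {x y : X} : d x y = 0 ↔ x = y := hd.1.2.2 x y

lemma self_eq_zero (hd : IsUltrametric d) (x : X) : d x x = 0 := hd.eq_zero_iff.2 rfl

lemma le_zero_iff (hd : IsUltrametric d) {x y : X} : d x y ≤ 0 ↔ x = y := by
  rw [← hd.eq_zero_iff, (hd.nonneg x y).ge_iff_eq']

lemma le_max (hd : IsUltrametric d) (x y z : X) : d x y ≤ max (d x z) (d z y) := hd.2 x y z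

end IsUltrametric

/-- The smallest ball containing both `x` and `y`, encoded as the ball around `x` with radius
`d x y`. In the representing tree it is the lowest common ancestor of the leaves `x` and `y`. -/
def twoPointBall (d : X → X → ℝ) (x y : X) : Set X := {z | d z x ≤ d x y}

lemma isBall_twoPointBall (hd : IsUltrametric d) (x y : X) : IsBall d (twoPointBall d x y) :=
  ⟨x, d x y, hd.nonneg x y, rfl⟩

lemma left_mem_twoPointBall (hd : IsUltrametric d) (x y : X) : x ∈ twoPointBall d x y :=
  (hd.self_eq_zero x).trans_le (hd.nonneg x y)

lemma right_mem_twoPointBall (hd : IsUltrametric d) (x y : X) : y ∈ twoPointBall d x y :=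
  (hd.comm y x).le

lemma dist_le_of_mem_twoPointBall (hd : IsUltrametric d) {x y z w : X}
    (hz : z ∈ twoPointBall d x y) (hw : w ∈ twoPointBall d x y) : d z w ≤ d x y :=
  (hd.le_max z w x).trans (max_le hz ((hd.comm x w).trans_le hw))

lemma IsBall.nonempty (hd : IsUltrametric d) {B : Set X} (hB : IsBall d B) : B.Nonempty := by
  obtain ⟨t, r, hr, rfl⟩ := hB
  exact ⟨t, (hd.self_eq_zero t).trans_le hr⟩

lemma IsBall.twoPointBall_subset (hd : IsUltrametric d) {B : Set X} (hB : IsBall d B) {x y : X}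
    (hx : x ∈ B) (hy : y ∈ B) : twoPointBall d x y ⊆ B := by
  obtain ⟨t, r, -, rfl⟩ := hB
  have hxy : d x y ≤ r := (hd.le_max x y t).trans (max_le hx ((hd.comm t y).trans_le hy))
  exact fun z hz => (hd.le_max z t x).trans (max_le (hz.trans hxy) hx)

lemma twoPointBall_comm (hd : IsUltrametric d) (x y : X) :
    twoPointBall d x y = twoPointBall d y x :=
  have subset (x y : X) : twoPointBall d x y ⊆ twoPointBall d y x :=
    (isBall_twoPointBall hd y x).twoPointBall_subset hd (right_mem_twoPointBall hd y x)
      (left_mem_twoPointBall hd y x)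
  (subset x y).antisymm (subset y x)

lemma twoPointBall_self (hd : IsUltrametric d) (x : X) : twoPointBall d x x = {x} := by
  ext z
  rw [twoPointBall, Set.mem_ofPred_eq, hd.self_eq_zero, hd.le_zero_iff, Set.mem_singleton_iff]

lemma isBall_singleton (hd : IsUltrametric d) (x : X) : IsBall d {x} :=
  twoPointBall_self hd x ▸ isBall_twoPointBall hd x x

lemma isBall_iff_exists_twoPointBall [Finite X] (hd : IsUltrametric d) {B : Set X} :
    IsBall d B ↔ ∃ x y, twoPointBall d x y = B := by
  constructor
  · intro hB
    have ⟨t, r, hr, hBtr⟩ := hB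
    have ht : t ∈ B := hBtr ▸ (hd.self_eq_zero t).trans_le hr
    obtain ⟨y, hy, hmax⟩ := Set.exists_max_image B (d · t) B.toFinite ⟨t, ht⟩
    exact ⟨t, y, (hB.twoPointBall_subset hd ht hy).antisymm
      fun x hx => (hmax x hx).trans_eq (hd.comm y t)⟩
  · rintro ⟨x, y, rfl⟩
    exact isBall_twoPointBall hd x y

lemma image_twoPointBall (hd : IsUltrametric d) (hρ : IsUltrametric ρ) {F : X → Y}
    (hF : IsBallPreserving d ρ F) (x y : X) :
    F '' twoPointBall d x y = twoPointBall ρ (F x) (F y) := by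
  refine (Set.image_subset_iff.2 ?_).antisymm ?_
  · exact (hF.2 _ (isBall_twoPointBall hρ _ _)).twoPointBall_subset hd
      (left_mem_twoPointBall hρ _ _) (right_mem_twoPointBall hρ _ _)
  · exact (hF.1 _ (isBall_twoPointBall hd x y)).twoPointBall_subset hρ
      (Set.mem_image_of_mem F (left_mem_twoPointBall hd x y))
      (Set.mem_image_of_mem F (right_mem_twoPointBall hd x y))

/-- The balls with more than one point, i.e. the inner nodes of the representing tree. Finite
spaces in which they form a chain make up the class `ℛ̃`. -/
def nontrivialBalls (d : X → X → ℝ) : Set (Set X) := {B | IsBall d B ∧ B.Nontrivial}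

lemma twoPointBall_mem_nontrivialBalls (hd : IsUltrametric d) {x y : X} (hxy : x ≠ y) :
    twoPointBall d x y ∈ nontrivialBalls d :=
  ⟨isBall_twoPointBall hd x y, x, left_mem_twoPointBall hd x y, y, right_mem_twoPointBall hd x y,
    hxy⟩

lemma isChain_nontrivialBalls_iff :
    IsChain (· ⊆ ·) (nontrivialBalls d) ↔ ∀ B₁ B₂ : Set X, IsBall d B₁ → IsBall d B₂ →
      B₁.Nontrivial → B₂.Nontrivial → B₁ ⊆ B₂ ∨ B₂ ⊆ B₁ :=
  ⟨fun h _ _ hB₁ hB₂ hn₁ hn₂ => h.total ⟨hB₁, hn₁⟩ ⟨hB₂, hn₂⟩,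
    fun h _ hB₁ _ hB₂ _ => h _ _ hB₁.1 hB₂.1 hB₁.2 hB₂.2⟩

lemma isChain_nontrivialBalls_of_isBallPreserving (h : IsChain (· ⊆ ·) (nontrivialBalls d))
    {F : X → Y} (hsurj : F.Surjective) (hF : IsBallPreserving d ρ F) :
    IsChain (· ⊆ ·) (nontrivialBalls ρ) := by
  have preimage_mem {B : Set Y} (hB : B ∈ nontrivialBalls ρ) : F ⁻¹' B ∈ nontrivialBalls d :=
    ⟨hF.2 B hB.1, hB.2.preimage hsurj⟩
  intro B₁ hB₁ B₂ hB₂ _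
  simpa only [hsurj.preimage_subset_preimage_iff] using
    h.total (preimage_mem hB₁) (preimage_mem hB₂)

lemma dist_le_dist_iff_of_isChain (hd : IsUltrametric d)
    (h : IsChain (· ⊆ ·) (nontrivialBalls d)) {x y z w : X} :
    d x y ≤ d z w ↔ x = y ∨ twoPointBall d x y ⊆ twoPointBall d z w := by
  constructor
  · refine fun hle => or_iff_not_imp_left.2 fun hxy => ?_
    have hzw : z ≠ w := by
      rintro rfl
      exact hxy (hd.le_zero_iff.1 (hle.trans_eq (hd.self_eq_zero z)))
    refine (h.total (twoPointBall_mem_nontrivialBalls hd hxy)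
      (twoPointBall_mem_nontrivialBalls hd hzw)).elim id fun hsub u hu => ?_
    exact (dist_le_of_mem_twoPointBall hd hu (hsub (left_mem_twoPointBall hd z w))).trans hle
  · rintro (rfl | hsub)
    · exact (hd.self_eq_zero x).trans_le (hd.nonneg z w)
    · exact dist_le_of_mem_twoPointBall hd (hsub (left_mem_twoPointBall hd x y))
        (hsub (right_mem_twoPointBall hd x y))

lemma WeaklySimilar.of_forall_dist_le_dist_iff {F : X → Y} (hF : F.Bijective)
    (h : ∀ x y z w, d x y ≤ d z w ↔ ρ (F x) (F y) ≤ ρ (F z) (F w)) : WeaklySimilar d ρ := by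
  obtain ⟨f, hf⟩ : ∃ f : ℝ → ℝ, ∀ x y, f (d x y) = ρ (F x) (F y) := by
    have factors : (fun p : X × X => ρ (F p.1) (F p.2)).FactorsThrough fun p => d p.1 p.2 :=
      fun p q hpq => le_antisymm ((h _ _ _ _).1 hpq.le) ((h _ _ _ _).1 hpq.ge)
    exact ⟨_, fun x y => factors.extend_apply 0 (x, y)⟩
  have hmono : StrictMonoOn f (spec d) := by
    rintro _ ⟨x, y, rfl⟩ _ ⟨z, w, rfl⟩ hlt
    rw [hf, hf]
    exact lt_of_not_ge fun hle => hlt.not_ge ((h _ _ _ _).2 hle)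
  refine ⟨F, f, hF, ⟨?_, hmono.injOn, ?_⟩, hmono, hf⟩
  · rintro _ ⟨x, y, rfl⟩
    exact ⟨F x, F y, (hf x y).symm⟩
  · rintro _ ⟨x', y', rfl⟩
    obtain ⟨x, rfl⟩ := hF.surjective x'
    obtain ⟨y, rfl⟩ := hF.surjective y'
    exact ⟨d x y, ⟨x, y, rfl⟩, hf x y⟩

lemma WeaklySimilar.ncard_spec_eq (h : WeaklySimilar d ρ) : (spec d).ncard = (spec ρ).ncard := by
  obtain ⟨_, _, _, hf, _⟩ := h
  exact hf.ncard_eq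

theorem weaklySimilar_of_isChain (hd : IsUltrametric d) (hρ : IsUltrametric ρ)
    (h : IsChain (· ⊆ ·) (nontrivialBalls d)) {F : X → Y} (hF : F.Bijective)
    (hball : IsBallPreserving d ρ F) : WeaklySimilar d ρ := by
  have hY := isChain_nontrivialBalls_of_isBallPreserving h hF.surjective hball
  refine .of_forall_dist_le_dist_iff hF fun x y z w => ?_
  rw [dist_le_dist_iff_of_isChain hd h, dist_le_dist_iff_of_isChain hρ hY,
    ← image_twoPointBall hd hρ hball, ← image_twoPointBall hd hρ hball,
    Set.image_subset_image_iff hF.injective, hF.injective.eq_iff]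

/-- An admissible labeling of the nodes of the representing tree: leaves get the label `0` and
labels strictly increase towards the root. -/
structure IsBallLabeling (d : X → X → ℝ) (μ : Set X → ℝ) : Prop where
  singleton (x : X) : μ {x} = 0
  strictMonoOn : StrictMonoOn μ {B | IsBall d B}

/-- The distance on `X` in which the diameter of each ball of `d` is its label under `μ`. -/
def labelDist (d : X → X → ℝ) (μ : Set X → ℝ) (x y : X) : ℝ := μ (twoPointBall d x y)

section Labeling

variable {μ : Set X → ℝ}

namespace IsBallLabeling

lemma pos (hd : IsUltrametric d) (hμ : IsBallLabeling d μ) {B : Set X}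
    (hB : B ∈ nontrivialBalls d) : 0 < μ B := by
  obtain ⟨x, hx⟩ := hB.2.nonempty
  calc 0 = μ {x} := (hμ.singleton x).symm
    _ < μ B := hμ.strictMonoOn (isBall_singleton hd x) hB.1 <|
      (Set.singleton_subset_iff.2 hx).ssubset_of_not_subset hB.2.not_subset_singleton

lemma labelDist_self (hd : IsUltrametric d) (hμ : IsBallLabeling d μ) (x : X) :
    labelDist d μ x x = 0 := by
  rw [labelDist, twoPointBall_self hd, hμ.singleton]

lemma labelDist_pos (hd : IsUltrametric d) (hμ : IsBallLabeling d μ) {x y : X} (hxy : x ≠ y) :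
    0 < labelDist d μ x y :=
  hμ.pos hd (twoPointBall_mem_nontrivialBalls hd hxy)

lemma labelDist_le_labelDist_iff (hd : IsUltrametric d) (hμ : IsBallLabeling d μ) {x y z : X} :
    labelDist d μ x y ≤ labelDist d μ x z ↔ d x y ≤ d x z := by
  have isBall := isBall_twoPointBall hd x
  have subset {y z : X} (h : d x y ≤ d x z) : twoPointBall d x y ⊆ twoPointBall d x z :=
    fun _ hu => hu.trans h
  refine ⟨fun hle => ?_, fun h => hμ.strictMonoOn.monotoneOn (isBall y) (isBall z) (subset h)⟩
  by_contra! hlt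
  have not_subset : ¬twoPointBall d x y ⊆ twoPointBall d x z := fun hsub =>
    hlt.not_ge ((hd.comm x y).trans_le (hsub (right_mem_twoPointBall hd x y)))
  exact hle.not_gt <|
    hμ.strictMonoOn (isBall z) (isBall y) ((subset hlt.le).ssubset_of_not_subset not_subset)

lemma isUltrametric_labelDist (hd : IsUltrametric d) (hμ : IsBallLabeling d μ) :
    IsUltrametric (labelDist d μ) := by
  have comm (x y : X) : labelDist d μ x y = labelDist d μ y x :=
    congrArg μ (twoPointBall_comm hd x y)
  refine ⟨⟨fun x y => ?_, comm, fun x y => ⟨fun h => ?_, ?_⟩⟩, fun x y z => le_max_iff.2 ?_⟩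
  · rw [← hμ.labelDist_self hd x, hμ.labelDist_le_labelDist_iff hd, hd.self_eq_zero]
    exact hd.nonneg x y
  · by_contra hxy
    exact (hμ.labelDist_pos hd hxy).ne' h
  · rintro rfl
    exact hμ.labelDist_self hd x
  · rw [comm x y, comm z y, hμ.labelDist_le_labelDist_iff hd, comm y x,
      hμ.labelDist_le_labelDist_iff hd, hd.comm y x, hd.comm y z]
    exact le_max_iff.1 (hd.le_max x y z)

lemma twoPointBall_labelDist (hd : IsUltrametric d) (hμ : IsBallLabeling d μ) (x y : X) :
    twoPointBall (labelDist d μ) x y = twoPointBall d x y := by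
  ext z
  rw [twoPointBall, twoPointBall, Set.mem_ofPred_eq, Set.mem_ofPred_eq,
    (hμ.isUltrametric_labelDist hd).comm z x, hμ.labelDist_le_labelDist_iff hd, hd.comm z x]

lemma isBall_labelDist_iff [Finite X] (hd : IsUltrametric d) (hμ : IsBallLabeling d μ)
    {B : Set X} : IsBall (labelDist d μ) B ↔ IsBall d B := by
  simp only [isBall_iff_exists_twoPointBall hd,
    isBall_iff_exists_twoPointBall (hμ.isUltrametric_labelDist hd), hμ.twoPointBall_labelDist hd]

lemma isBallPreserving_id [Finite X] (hd : IsUltrametric d) (hμ : IsBallLabeling d μ) :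
    IsBallPreserving d (labelDist d μ) id := by
  simp only [IsBallPreserving, Set.image_id, Set.preimage_id, hμ.isBall_labelDist_iff hd,
    imp_self, implies_true, and_self]

lemma spec_labelDist [Finite X] [Nonempty X] (hd : IsUltrametric d) (hμ : IsBallLabeling d μ) :
    spec (labelDist d μ) = insert 0 (μ '' nontrivialBalls d) := by
  ext r
  constructor
  · rintro ⟨x, y, rfl⟩
    obtain rfl | hxy := eq_or_ne x y
    · exact .inl (hμ.labelDist_self hd x)
    · exact .inr ⟨_, twoPointBall_mem_nontrivialBalls hd hxy, rfl⟩
  · rintro (rfl | ⟨B, hB, rfl⟩)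
    · obtain ⟨x⟩ := ‹Nonempty X›
      exact ⟨x, x, hμ.labelDist_self hd x⟩
    · obtain ⟨x, y, rfl⟩ := (isBall_iff_exists_twoPointBall hd).1 hB.1
      exact ⟨x, y, rfl⟩

lemma ncard_spec_labelDist [Finite X] [Nonempty X] (hd : IsUltrametric d)
    (hμ : IsBallLabeling d μ) :
    (spec (labelDist d μ)).ncard = (μ '' nontrivialBalls d).ncard + 1 := by
  rw [hμ.spec_labelDist hd, Set.ncard_insert_of_notMem]
  rintro ⟨B, hB, h0⟩
  exact (hμ.pos hd hB).ne' h0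

end IsBallLabeling

lemma exists_isBallLabeling_eq_of_strictMono (hd : IsUltrametric d) {m : Set X → ℕ}
    (hm : StrictMono m) :
    ∃ μ : Set X → ℝ, IsBallLabeling d μ ∧ ∀ B : Set X, B.Nontrivial → μ B = m B := by
  classical
  refine ⟨fun B => if B.Nontrivial then m B else 0, ⟨fun x => ?_, ?_⟩, fun B hB => if_pos hB⟩
  · exact if_neg Set.not_nontrivial_singleton
  · intro A hA B _ hAB
    have hB : B.Nontrivial := by
      obtain ⟨a, ha⟩ := hA.nonempty hd
      obtain ⟨b, hbB, hbA⟩ := Set.exists_of_ssubset hAB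
      exact ⟨a, hAB.subset ha, b, hbB, fun hab => hbA (hab ▸ ha)⟩
    simp only [hB, if_true]
    split_ifs
    · exact_mod_cast hm hAB
    · exact_mod_cast (Nat.zero_le _).trans_lt (hm hAB)

end Labeling

lemma exists_strictMono_injective (P : Type*) [PartialOrder P] [Finite P] :
    ∃ m : P → ℕ, StrictMono m ∧ m.Injective := by
  have : Finite (LinearExtension P) := ‹Finite P›
  have := Fintype.ofFinite (LinearExtension P)
  let e : LinearExtension P ↪o ℕ := (Fintype.orderIsoFinOfCardEq _ rfl).symm.toOrderEmbedding.trans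
    (Fin.valOrderEmb _)
  have injective : (e ∘ toLinearExtension : P → ℕ).Injective := e.injective.comp fun _ _ h => h
  exact ⟨_, (e.monotone.comp toLinearExtension.monotone).strictMono_of_injective injective,
    injective⟩

lemma exists_strictMono_apply_eq {P : Type*} [Preorder P] {m : P → ℕ} (hm : StrictMono m)
    {a b : P} (hab : ¬a ≤ b) (hba : ¬b ≤ a) : ∃ m' : P → ℕ, StrictMono m' ∧ m' a = m' b := by
  classical
  wlog hle : m a ≤ m b generalizing a b
  · obtain ⟨m', hm', heq⟩ := this hba hab (le_of_not_ge hle)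
    exact ⟨m', hm', heq.symm⟩
  -- Adding a constant on the upper set of `a` keeps `m` strictly monotone and does not affect `b`.
  have shift_mono : Monotone fun p => if a ≤ p then m b - m a else 0 := by
    intro p q hpq
    by_cases hp : a ≤ p
    · simp only [hp, hp.trans hpq, if_true, le_refl]
    · simp only [hp, if_false, Nat.zero_le]
  exact ⟨_, hm.add_monotone shift_mono, by simp [hab, hle]⟩

theorem isChain_nontrivialBalls_of_forall_ncard_spec_eq [Finite X] (hd : IsUltrametric d)
    (h : ∀ ρ : X → X → ℝ, IsUltrametric ρ → IsBallPreserving d ρ id →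
      (spec d).ncard = (spec ρ).ncard) :
    IsChain (· ⊆ ·) (nontrivialBalls d) := by
  intro A hA B hB hAB
  by_contra! hincomp
  have : Nonempty X := ⟨hA.2.nonempty.some⟩
  obtain ⟨m, hm, hinj⟩ := exists_strictMono_injective (Set X)
  obtain ⟨m', hm', heq⟩ := exists_strictMono_apply_eq hm hincomp.1 hincomp.2
  have ncard_image_add_one {m : Set X → ℕ} (hm : StrictMono m) :
      (m '' nontrivialBalls d).ncard + 1 = (spec d).ncard := by
    obtain ⟨μ, hμ, hμm⟩ := exists_isBallLabeling_eq_of_strictMono hd hm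
    rw [h _ (hμ.isUltrametric_labelDist hd) (hμ.isBallPreserving_id hd),
      hμ.ncard_spec_labelDist hd, Set.image_congr fun B hB => hμm B hB.2,
      ← Set.image_image Nat.cast m, Set.ncard_image_of_injective _ Nat.cast_injective]
  have hinj' : Set.InjOn m' (nontrivialBalls d) := by
    refine Set.injOn_of_ncard_image_eq ?_
    rw [← Set.ncard_image_of_injective _ hinj]
    exact Nat.succ_injective ((ncard_image_add_one hm').trans (ncard_image_add_one hm).symm)
  exact hAB (hinj' hA hB heq)

/-- For a finite nonempty ultrametric space `X`: (every finite nonempty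
ultrametric space `Y` admitting a bijective ball-preserving map from `X` is weakly similar
to `X`) iff (the balls of `X` with more than one point are linearly ordered by inclusion,
i.e. `X ∈ ℛ̃`). -/
theorem stmt3 {X : Type} [Finite X] [Nonempty X] (d : X → X → ℝ)
    (hd : IsUltrametric d) :
    (∀ (Y : Type) (_ : Finite Y) (_ : Nonempty Y) (ρ : Y → Y → ℝ),
        IsUltrametric ρ →
        (∃ F : X → Y, Function.Bijective F ∧ IsBallPreserving d ρ F) →
        WeaklySimilar d ρ) ↔
      (∀ B₁ B₂ : Set X, IsBall d B₁ → IsBall d B₂ →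
        B₁.Nontrivial → B₂.Nontrivial → B₁ ⊆ B₂ ∨ B₂ ⊆ B₁) := by
  rw [← isChain_nontrivialBalls_iff]
  constructor
  · intro h
    refine isChain_nontrivialBalls_of_forall_ncard_spec_eq hd fun ρ hρ hball => ?_
    exact (h X ‹_› ‹_› ρ hρ ⟨id, Function.bijective_id, hball⟩).ncard_spec_eq
  · rintro h Y _ _ ρ hρ ⟨F, hF, hball⟩
    exact weaklySimilar_of_isChain hd hρ h hF hball
end

section
/- Let X and Y be finite nonempty semimetric spaces. If X and Y are weakly similar, then the Hasse diagrams of their balleans ordered by inclusion are isomorphic as directed graphs; that is, there exists a bijection F from the set of balls of X onto the set of balls of Y such that for all balls B₁, B₂ of X, B₂ covers B₁ in the inclusion order on the ballean of X if and only if F(B₂) covers F(B₁) in the inclusion order on the ballean of Y. -/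
/-!
The bijection is `B ↦ Φ '' B`, where `Φ` is a weak similarity. Its scaling function is strictly
increasing, so `Φ` preserves and reflects every comparison between two distances to a common
center. A ball whose radius is the distance `d s t` from its center `t` to one of its points `s` is
described by such comparisons alone, and in a finite space every ball has this form. Hence `Φ` and
its inverse send balls to balls. Taking images under `Φ` also preserves and reflects inclusion, and
therefore covering.
-/

/-- Every ball has a point at maximal distance from its center, so that its radius may be replaced
by an element of the spectrum. Finite semimetric spaces have this property, and so do semimetrics
with values in `ℕ`. It is a condition on each pair of a center `t` and a radius `r`, because the
same set can be a ball in several ways. -/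
def HasFarthestPoints {X : Type*} (d : X → X → ℝ) : Prop :=
  ∀ (t : X) (r : ℝ), 0 ≤ r → ∃ s, d s t ≤ r ∧ ∀ x, d x t ≤ r → d x t ≤ d s t

section

variable {X Y : Type*} {d : X → X → ℝ} {ρ : Y → Y → ℝ}

theorem hasFarthestPoints_of_finite [Finite X] (hself : ∀ t, d t t = 0) :
    HasFarthestPoints d := fun t r hr =>
  Set.exists_max_image {x | d x t ≤ r} (d · t) (Set.toFinite _) ⟨t, (hself t).trans_le hr⟩

theorem isBall_setOf_le_dist (hnonneg : ∀ x y, 0 ≤ d x y) (t s : X) :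
    IsBall d {x | d x t ≤ d s t} :=
  ⟨t, d s t, hnonneg s t, rfl⟩

theorem IsBall.exists_eq_setOf_le_dist {B : Set X} (hB : IsBall d B) (hd : HasFarthestPoints d) :
    ∃ t s, B = {x | d x t ≤ d s t} := by
  obtain ⟨t, r, hr, rfl⟩ := hB
  obtain ⟨s, hs, hmax⟩ := hd t r hr
  exact ⟨t, s, Set.ext fun x => ⟨hmax x, fun hx => le_trans hx hs⟩⟩

namespace IsWeakSimilarity

variable {Φ : X → Y} {f : ℝ → ℝ}

theorem dist_le_dist_iff (h : IsWeakSimilarity d ρ Φ f) {x y z w : X} :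
    ρ (Φ x) (Φ y) ≤ ρ (Φ z) (Φ w) ↔ d x y ≤ d z w := by
  obtain ⟨-, -, hmono, hf⟩ := h
  rw [← hf, ← hf]
  exact hmono.le_iff_le ⟨x, y, rfl⟩ ⟨z, w, rfl⟩

theorem preimage_setOf_le_dist (h : IsWeakSimilarity d ρ Φ f) (t s : X) :
    Φ ⁻¹' {y | ρ y (Φ t) ≤ ρ (Φ s) (Φ t)} = {x | d x t ≤ d s t} :=
  Set.ext fun _ => h.dist_le_dist_iff

theorem image_setOf_le_dist (h : IsWeakSimilarity d ρ Φ f) (t s : X) :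
    Φ '' {x | d x t ≤ d s t} = {y | ρ y (Φ t) ≤ ρ (Φ s) (Φ t)} := by
  rw [← h.preimage_setOf_le_dist, Set.image_preimage_eq _ h.1.surjective]

theorem isBallPreserving (h : IsWeakSimilarity d ρ Φ f)
    (hd₀ : ∀ x y, 0 ≤ d x y) (hρ₀ : ∀ x y, 0 ≤ ρ x y)
    (hd : HasFarthestPoints d) (hρ : HasFarthestPoints ρ) : IsBallPreserving d ρ Φ := by
  constructor
  · intro B hB
    obtain ⟨t, s, rfl⟩ := hB.exists_eq_setOf_le_dist hd
    rw [h.image_setOf_le_dist]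
    exact isBall_setOf_le_dist hρ₀ _ _
  · intro C hC
    obtain ⟨t', s', rfl⟩ := hC.exists_eq_setOf_le_dist hρ
    obtain ⟨t, rfl⟩ := h.1.surjective t'
    obtain ⟨s, rfl⟩ := h.1.surjective s'
    rw [h.preimage_setOf_le_dist]
    exact isBall_setOf_le_dist hd₀ _ _

end IsWeakSimilarity

namespace IsBallPreserving

variable {Φ : X → Y}

theorem bijOn_image (h : IsBallPreserving d ρ Φ) (hΦ : Function.Bijective Φ) :
    Set.BijOn (Φ '' ·) {B | IsBall d B} {C | IsBall ρ C} :=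
  ⟨h.1, hΦ.injective.image_injective.injOn,
    fun C hC => ⟨Φ ⁻¹' C, h.2 C hC, Set.image_preimage_eq C hΦ.surjective⟩⟩

theorem ballCovers_image_iff (h : IsBallPreserving d ρ Φ) (hΦ : Function.Bijective Φ)
    {B₁ B₂ : Set X} (h₁ : IsBall d B₁) (h₂ : IsBall d B₂) :
    BallCovers ρ (Φ '' B₁) (Φ '' B₂) ↔ BallCovers d B₁ B₂ := by
  have hssubset : Φ '' B₁ ⊂ Φ '' B₂ ↔ B₁ ⊂ B₂ :=
    hΦ.injective.injOn.image_ssubset_image_iff (Set.subset_univ _) (Set.subset_univ _)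
  have hbetween :
      (∀ C, IsBall ρ C → Φ '' B₁ ⊆ C → C ⊆ Φ '' B₂ → C = Φ '' B₁ ∨ C = Φ '' B₂) ↔
        ∀ B, IsBall d B → B₁ ⊆ B → B ⊆ B₂ → B = B₁ ∨ B = B₂ := by
    refine (h.bijOn_image hΦ).forall.trans ?_
    simp only [Set.image_subset_image_iff hΦ.injective, hΦ.injective.image_injective.eq_iff,
      Set.mem_ofPred_eq]
  simp only [BallCovers, h.1 B₁ h₁, h.1 B₂ h₂, h₁, h₂, hssubset, hbetween]

end IsBallPreserving

end

theorem stmt5_general {X Y : Type*} (d : X → X → ℝ) (ρ : Y → Y → ℝ)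
    (hd₀ : ∀ x y, 0 ≤ d x y) (hρ₀ : ∀ x y, 0 ≤ ρ x y)
    (hd : HasFarthestPoints d) (hρ : HasFarthestPoints ρ) (h : WeaklySimilar d ρ) :
    ∃ F : Set X → Set Y, Set.BijOn F {B | IsBall d B} {B | IsBall ρ B} ∧
      ∀ B₁ B₂ : Set X, IsBall d B₁ → IsBall d B₂ →
        (BallCovers d B₁ B₂ ↔ BallCovers ρ (F B₁) (F B₂)) := by
  obtain ⟨Φ, f, hΦ⟩ := h
  have hball : IsBallPreserving d ρ Φ := hΦ.isBallPreserving hd₀ hρ₀ hd hρ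
  exact ⟨(Φ '' ·), hball.bijOn_image hΦ.1,
    fun _ _ h₁ h₂ => (hball.ballCovers_image_iff hΦ.1 h₁ h₂).symm⟩

/-- If finite nonempty semimetric spaces `X` and `Y` are weakly similar,
then the Hasse diagrams of their balleans (ordered by inclusion) are isomorphic as directed
graphs: some bijection of the balleans preserves the covering relation in both directions. -/
theorem stmt5 {X Y : Type*} [Finite X] [Finite Y] [Nonempty X] [Nonempty Y]
    (d : X → X → ℝ) (ρ : Y → Y → ℝ) (hd : IsSemimetric d) (hρ : IsSemimetric ρ)
    (h : WeaklySimilar d ρ) :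
    ∃ F : Set X → Set Y, Set.BijOn F {B | IsBall d B} {B | IsBall ρ B} ∧
      ∀ B₁ B₂ : Set X, IsBall d B₁ → IsBall d B₂ →
        (BallCovers d B₁ B₂ ↔ BallCovers ρ (F B₁) (F B₂)) :=
  stmt5_general d ρ hd.1 hρ.1 (hasFarthestPoints_of_finite fun t => (hd.2.2 t t).2 rfl)
    (hasFarthestPoints_of_finite fun t => (hρ.2.2 t t).2 rfl) h
end

section
/- Let Φ : X → Y be a weak similarity between finite nonempty semimetric spaces (X,d) and (Y,ρ) with scaling function f : Sp(X) → Sp(Y). Let t ∈ X, r ≥ 0, let B = B_r(t) = {x ∈ X : d(x,t) ≤ r}, and set r₀ = max{d(t,x) : x ∈ B}. Then the image of B under Φ is the ball of radius f(r₀) centered at Φ(t): Φ(B) = {y ∈ Y : ρ(y, Φ(t)) ≤ f(r₀)}. -/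
theorem setOf_le_eq_of_isGreatest {X α : Type*} [Preorder α] {g : X → α} {r r₀ : α}
    (hr₀ : IsGreatest (g '' {x | g x ≤ r}) r₀) : {x | g x ≤ r} = {x | g x ≤ r₀} := by
  obtain ⟨⟨z, hz, rfl⟩, hub⟩ := hr₀
  ext x
  exact ⟨fun hx => hub ⟨x, hx, rfl⟩, fun hx => le_trans hx hz⟩

theorem image_setOf_le_of_strictMonoOn_range {X Y α β : Type*} [LinearOrder α] [Preorder β]
    {g : X → α} {k : Y → β} {Φ : X → Y} {f : α → β} (hΦ : Function.Surjective Φ)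
    (hf : StrictMonoOn f (Set.range g)) (hfg : ∀ x, f (g x) = k (Φ x)) {s : α}
    (hs : s ∈ Set.range g) : Φ '' {x | g x ≤ s} = {y | k y ≤ f s} := by
  have preimage_eq : Φ ⁻¹' {y | k y ≤ f s} = {x | g x ≤ s} := by
    ext x
    rw [Set.mem_preimage, Set.mem_ofPred_eq, ← hfg, hf.le_iff_le ⟨x, rfl⟩ hs, Set.mem_ofPred_eq]
  rw [← preimage_eq, Set.image_preimage_eq _ hΦ]

theorem stmt7_general {X Y : Type*} {d : X → X → ℝ} {ρ : Y → Y → ℝ} {Φ : X → Y} {f : ℝ → ℝ}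
    (hΦ : Function.Surjective Φ) (hf : StrictMonoOn f (spec d))
    (hfd : ∀ x y, f (d x y) = ρ (Φ x) (Φ y)) {t : X} {r r₀ : ℝ}
    (hr₀ : IsGreatest ((d · t) '' {x | d x t ≤ r}) r₀) :
    Φ '' {x | d x t ≤ r} = {y | ρ y (Φ t) ≤ f r₀} := by
  have range_subset_spec : Set.range (d · t) ⊆ spec d := by
    rintro _ ⟨x, rfl⟩
    exact ⟨x, t, rfl⟩
  rw [setOf_le_eq_of_isGreatest hr₀]
  exact image_setOf_le_of_strictMonoOn_range (k := (ρ · (Φ t))) hΦ (hf.mono range_subset_spec)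
    (hfd · t) (Set.image_subset_range _ _ hr₀.1)

/-- If `Φ` is a weak similarity with scaling function `f`, `B = B_r(t)` and
`r₀ = max {d t x : x ∈ B}`, then `Φ(B)` is the ball of radius `f r₀` centered at `Φ t`. -/
theorem stmt7 {X Y : Type*} [Finite X] [Finite Y] [Nonempty X] [Nonempty Y]
    (d : X → X → ℝ) (ρ : Y → Y → ℝ) (hd : IsSemimetric d) (hρ : IsSemimetric ρ)
    (Φ : X → Y) (f : ℝ → ℝ) (h : IsWeakSimilarity d ρ Φ f)
    (t : X) (r : ℝ) (hr : 0 ≤ r) (B : Set X) (hB : B = {x | d x t ≤ r})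
    (r₀ : ℝ) (hr₀ : IsGreatest {s | ∃ x ∈ B, d t x = s} r₀) :
    Φ '' B = {y | ρ y (Φ t) ≤ f r₀} := by
  subst hB
  exact stmt7_general h.1.surjective h.2.2.1 h.2.2.2 (funext (hd.2.1 t) ▸ hr₀)
end

section
/- Let X and Y be finite nonempty semimetric spaces. Then every weak similarity Φ : X → Y is a ball-preserving bijection; that is, the image under Φ of every ball of X is a ball of Y, and the preimage under Φ of every ball of Y is a ball of X. -/
/-!
A strictly increasing scaling function only sees the order of the distances, whereas the radius of
a ball is an arbitrary real number on which it need not be defined. In a finite space the radius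
can be lowered to the largest distance from the centre to a point of the ball. The ball is then
`{x | d x t ≤ d m t}`, described by comparing two distances, and a weak similarity carries such a
set to the set described by the images of `t` and `m`.
-/

theorem exists_setOf_le_eq_setOf_le_apply {α β : Type*} [LinearOrder β] {g : α → β} {r : β}
    (hfin : {x | g x ≤ r}.Finite) (hne : {x | g x ≤ r}.Nonempty) :
    ∃ m, {x | g x ≤ r} = {x | g x ≤ g m} := by
  obtain ⟨m, hmr, hmax⟩ := Set.exists_max_image _ g hfin hne
  exact ⟨m, Set.Subset.antisymm hmax fun _ hx => le_trans hx hmr⟩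

/-- Every ball has a centre and a radius such that the radius is the distance from the centre to
some point. This replaces finiteness as the condition under which weak similarities preserve balls;
it also holds in compact metric spaces, for instance. The centre is allowed to change with the
radius. -/
def HasAttainedRadii {X : Type*} (d : X → X → ℝ) : Prop :=
  ∀ B : Set X, IsBall d B → ∃ t m, B = {x | d x t ≤ d m t}

namespace IsSemimetric

variable {X : Type*} {d : X → X → ℝ}

theorem isBall_setOf_le (hd : IsSemimetric d) (t m : X) : IsBall d {x | d x t ≤ d m t} :=
  ⟨t, d m t, hd.1 m t, rfl⟩

theorem hasAttainedRadii_of_finite_balls (hd : IsSemimetric d)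
    (hfin : ∀ B : Set X, IsBall d B → B.Finite) : HasAttainedRadii d := by
  rintro _ ⟨t, r, hr, rfl⟩
  have center_mem : d t t ≤ r := ((hd.2.2 t t).2 rfl).trans_le hr
  exact ⟨t, exists_setOf_le_eq_setOf_le_apply (hfin _ ⟨t, r, hr, rfl⟩) ⟨t, center_mem⟩⟩

end IsSemimetric

namespace IsWeakSimilarity

variable {X Y : Type*} {d : X → X → ℝ} {ρ : Y → Y → ℝ} {Φ : X → Y} {f : ℝ → ℝ}

theorem le_iff_le (h : IsWeakSimilarity d ρ Φ f) (x y z w : X) :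
    ρ (Φ x) (Φ y) ≤ ρ (Φ z) (Φ w) ↔ d x y ≤ d z w := by
  obtain ⟨-, -, hmono, hf⟩ := h
  rw [← hf, ← hf]
  exact hmono.le_iff_le ⟨x, y, rfl⟩ ⟨z, w, rfl⟩

theorem preimage_setOf_le (h : IsWeakSimilarity d ρ Φ f) (t m : X) :
    Φ ⁻¹' {y | ρ y (Φ t) ≤ ρ (Φ m) (Φ t)} = {x | d x t ≤ d m t} :=
  Set.ext fun x => h.le_iff_le x t m t

theorem image_setOf_le (h : IsWeakSimilarity d ρ Φ f) (t m : X) :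
    Φ '' {x | d x t ≤ d m t} = {y | ρ y (Φ t) ≤ ρ (Φ m) (Φ t)} := by
  rw [← h.preimage_setOf_le, Set.image_preimage_eq _ h.1.surjective]

theorem isBall_image (h : IsWeakSimilarity d ρ Φ f) (hρ : IsSemimetric ρ)
    (hdr : HasAttainedRadii d) {B : Set X} (hB : IsBall d B) : IsBall ρ (Φ '' B) := by
  obtain ⟨t, m, rfl⟩ := hdr B hB
  rw [h.image_setOf_le]
  exact hρ.isBall_setOf_le (Φ t) (Φ m)

theorem isBall_preimage (h : IsWeakSimilarity d ρ Φ f) (hd : IsSemimetric d)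
    (hρr : HasAttainedRadii ρ) {B : Set Y} (hB : IsBall ρ B) : IsBall d (Φ ⁻¹' B) := by
  obtain ⟨t', m', rfl⟩ := hρr B hB
  obtain ⟨t, rfl⟩ := h.1.surjective t'
  obtain ⟨m, rfl⟩ := h.1.surjective m'
  rw [h.preimage_setOf_le]
  exact hd.isBall_setOf_le t m

end IsWeakSimilarity

theorem stmt8_general {X Y : Type*} {d : X → X → ℝ} {ρ : Y → Y → ℝ}
    (hd : IsSemimetric d) (hρ : IsSemimetric ρ)
    (hdr : HasAttainedRadii d) (hρr : HasAttainedRadii ρ)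
    {Φ : X → Y} (h : ∃ f : ℝ → ℝ, IsWeakSimilarity d ρ Φ f) :
    Function.Bijective Φ ∧ IsBallPreserving d ρ Φ := by
  obtain ⟨f, hΦ⟩ := h
  exact ⟨hΦ.1, fun _ => hΦ.isBall_image hρ hdr, fun _ => hΦ.isBall_preimage hd hρr⟩

/-- Every weak similarity between finite nonempty semimetric spaces is a
ball-preserving bijection. -/
theorem stmt8 {X Y : Type*} [Finite X] [Finite Y] [Nonempty X] [Nonempty Y]
    (d : X → X → ℝ) (ρ : Y → Y → ℝ) (hd : IsSemimetric d) (hρ : IsSemimetric ρ)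
    (Φ : X → Y) (h : ∃ f : ℝ → ℝ, IsWeakSimilarity d ρ Φ f) :
    Function.Bijective Φ ∧ IsBallPreserving d ρ Φ :=
  stmt8_general hd hρ (hd.hasAttainedRadii_of_finite_balls fun B _ => B.toFinite)
    (hρ.hasAttainedRadii_of_finite_balls fun B _ => B.toFinite) h
end

section
/- Let X and Y be finite nonempty semimetric spaces. Then the Hasse diagrams of their balleans ordered by inclusion are isomorphic as directed graphs (i.e., there exists a bijection F from the balls of X onto the balls of Y such that for all balls B₁, B₂ of X, B₂ covers B₁ in the inclusion order on the ballean of X if and only if F(B₂) covers F(B₁) in the inclusion order on the ballean of Y) if and only if there exists a bijective ball-preserving mapping f : X → Y. -/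
/-! An order isomorphism between the balleans matches their minimal elements. These are exactly the
singletons, so it induces a bijection between the points, and it is itself the image map of that
bijection because `x ∈ B` says that `{x} ≤ B`. In a locally finite poset the order is the reflexive
transitive closure of the covering relation, so an isomorphism of the Hasse diagrams already is an
order isomorphism. -/

open Set

/-- The order isomorphism underlying an isomorphism of the Hasse diagrams of locally finite
posets. -/
def orderIsoOfCovByIff {α β : Type*} [PartialOrder α] [PartialOrder β]
    [LocallyFiniteOrder α] [LocallyFiniteOrder β]
    (e : α ≃ β) (he : ∀ a b, a ⋖ b ↔ e a ⋖ e b) : α ≃o β :=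
  e.toOrderIso ((monotone_iff_forall_covBy _).2 fun a b hab => ((he a b).1 hab).le)
    ((monotone_iff_forall_covBy _).2 fun a b hab => ((he _ _).2 (by simpa using hab)).le)

/-- A family of nonempty sets that contains every singleton, so that its minimal members stand for
the points of the underlying type. -/
structure IsPointFamily {X : Type*} (𝒜 : Set (Set X)) : Prop where
  nonempty_of_mem : ∀ A ∈ 𝒜, A.Nonempty
  singleton_mem : ∀ x, {x} ∈ 𝒜

namespace IsPointFamily

variable {X Y : Type*} {𝒜 : Set (Set X)} {ℬ : Set (Set Y)}

theorem isMin_iff_exists_eq_singleton (h𝒜 : IsPointFamily 𝒜) (A : 𝒜) :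
    IsMin A ↔ ∃ x, (A : Set X) = {x} := by
  constructor
  · intro hA
    obtain ⟨x, hx⟩ := h𝒜.nonempty_of_mem A A.2
    have hxA : (⟨{x}, h𝒜.singleton_mem x⟩ : 𝒜) ≤ A := singleton_subset_iff.2 hx
    exact ⟨x, Subset.antisymm (hA hxA) hxA⟩
  · rintro ⟨x, hx⟩ B hBA
    have hB : (B : Set X) = {x} :=
      (h𝒜.nonempty_of_mem B B.2).subset_singleton_iff.1 (hx ▸ hBA)
    exact (hx.trans hB.symm).subset

/-- The points of `X` as the minimal members of a family, via `x ↦ {x}`. -/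
noncomputable def equivMin (h𝒜 : IsPointFamily 𝒜) : X ≃ {A : 𝒜 // IsMin A} :=
  Equiv.ofBijective
    (fun x => ⟨⟨{x}, h𝒜.singleton_mem x⟩, (h𝒜.isMin_iff_exists_eq_singleton _).2 ⟨x, rfl⟩⟩)
    ⟨fun _ _ h => singleton_injective (congrArg (fun A => (A.1 : Set X)) h), fun ⟨A, hA⟩ =>
      ((h𝒜.isMin_iff_exists_eq_singleton A).1 hA).imp fun _ hx =>
        Subtype.ext (Subtype.ext hx.symm)⟩

/-- The bijection between points induced by an order isomorphism of families through their minimal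
members. -/
noncomputable def pointEquiv (h𝒜 : IsPointFamily 𝒜) (hℬ : IsPointFamily ℬ) (e : 𝒜 ≃o ℬ) :
    X ≃ Y :=
  h𝒜.equivMin.trans
    ((e.toEquiv.subtypeEquiv fun _ => e.isMin_apply.symm).trans hℬ.equivMin.symm)

theorem apply_singleton_eq (h𝒜 : IsPointFamily 𝒜) (hℬ : IsPointFamily ℬ) (e : 𝒜 ≃o ℬ) (x : X) :
    e ⟨{x}, h𝒜.singleton_mem x⟩ = ⟨{pointEquiv h𝒜 hℬ e x}, hℬ.singleton_mem _⟩ :=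
  congrArg Subtype.val (hℬ.equivMin.apply_symm_apply
    (e.toEquiv.subtypeEquiv (fun _ => e.isMin_apply.symm) (h𝒜.equivMin x))).symm

theorem coe_apply_eq_image (h𝒜 : IsPointFamily 𝒜) (hℬ : IsPointFamily ℬ) (e : 𝒜 ≃o ℬ) (A : 𝒜) :
    (e A : Set Y) = pointEquiv h𝒜 hℬ e '' A := by
  ext y
  obtain ⟨x, rfl⟩ := (pointEquiv h𝒜 hℬ e).surjective y
  calc pointEquiv h𝒜 hℬ e x ∈ (e A : Set Y)
      ↔ (⟨{pointEquiv h𝒜 hℬ e x}, hℬ.singleton_mem _⟩ : ℬ) ≤ e A := singleton_subset_iff.symm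
    _ ↔ (⟨{x}, h𝒜.singleton_mem x⟩ : 𝒜) ≤ A := by rw [← apply_singleton_eq, e.le_iff_le]
    _ ↔ x ∈ (A : Set X) := singleton_subset_iff
    _ ↔ pointEquiv h𝒜 hℬ e x ∈ pointEquiv h𝒜 hℬ e '' A :=
      (pointEquiv h𝒜 hℬ e).injective.mem_set_image.symm

theorem bijOn_image_pointEquiv (h𝒜 : IsPointFamily 𝒜) (hℬ : IsPointFamily ℬ) (e : 𝒜 ≃o ℬ) :
    BijOn (image (pointEquiv h𝒜 hℬ e)) 𝒜 ℬ := by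
  refine ⟨fun A hA => ?_, (pointEquiv h𝒜 hℬ e).injective.image_injective.injOn, fun B hB => ?_⟩
  · exact coe_apply_eq_image h𝒜 hℬ e ⟨A, hA⟩ ▸ (e ⟨A, hA⟩).2
  · refine ⟨e.symm ⟨B, hB⟩, (e.symm ⟨B, hB⟩).2, ?_⟩
    rw [← coe_apply_eq_image, e.apply_symm_apply]

end IsPointFamily

/-- The order isomorphism of families of sets given by the image map of an injective function. -/
noncomputable def imageOrderIso {X Y : Type*} {𝒜 : Set (Set X)} {ℬ : Set (Set Y)} {g : X → Y}
    (hg : Function.Injective g) (h : BijOn (image g) 𝒜 ℬ) : 𝒜 ≃o ℬ where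
  toEquiv := h.equiv (image g)
  map_rel_iff' := image_subset_image_iff hg

/-- The ballean of `(X, d)`, as a family of sets; the order on the corresponding subtype is
inclusion. -/
def ballean {X : Type*} (d : X → X → ℝ) : Set (Set X) := {B | IsBall d B}

section Ballean

variable {X Y : Type*} {d : X → X → ℝ} {ρ : Y → Y → ℝ}

theorem IsSemimetric.nonpos_iff (hd : IsSemimetric d) (x y : X) : d x y ≤ 0 ↔ x = y :=
  (hd.1 x y).ge_iff_eq'.trans (hd.2.2 x y)

theorem isPointFamily_ballean (hd : ∀ x y, d x y ≤ 0 ↔ x = y) : IsPointFamily (ballean d) where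
  nonempty_of_mem := by
    rintro _ ⟨t, r, hr, rfl⟩
    exact ⟨t, ((hd t t).2 rfl).trans hr⟩
  singleton_mem t := ⟨t, 0, le_rfl, Set.ext fun x => (hd x t).symm⟩

theorem ballCovers_iff_covBy (A B : ballean d) : BallCovers d A B ↔ A ⋖ B := by
  rw [covBy_iff_lt_and_eq_or_eq]
  simp only [Subtype.forall, Subtype.ext_iff]
  exact ⟨fun h => h.2.2, fun h => ⟨A.2, B.2, h⟩⟩

theorem isBallPreserving_iff_bijOn_image {g : X → Y} (hg : Function.Bijective g) :
    IsBallPreserving d ρ g ↔ BijOn (image g) (ballean d) (ballean ρ) := by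
  constructor
  · rintro ⟨himage, hpreimage⟩
    exact ⟨himage, hg.1.image_injective.injOn, fun B hB =>
      ⟨g ⁻¹' B, hpreimage B hB, image_preimage_eq B hg.2⟩⟩
  · intro h
    refine ⟨h.mapsTo, fun B hB => ?_⟩
    obtain ⟨A, hA, rfl⟩ := h.surjOn hB
    rwa [preimage_image_eq A hg.1]

theorem ballCovers_image_iff {g : X → Y} (hg : Function.Injective g)
    (h : BijOn (image g) (ballean d) (ballean ρ)) {A B : Set X} (hA : IsBall d A)
    (hB : IsBall d B) : BallCovers ρ (g '' A) (g '' B) ↔ BallCovers d A B :=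
  calc BallCovers ρ (g '' A) (g '' B)
      ↔ imageOrderIso hg h ⟨A, hA⟩ ⋖ imageOrderIso hg h ⟨B, hB⟩ :=
        ballCovers_iff_covBy (imageOrderIso hg h ⟨A, hA⟩) (imageOrderIso hg h ⟨B, hB⟩)
    _ ↔ (⟨A, hA⟩ : ballean d) ⋖ ⟨B, hB⟩ := apply_covBy_apply_iff _
    _ ↔ BallCovers d A B := (ballCovers_iff_covBy (d := d) ⟨A, hA⟩ ⟨B, hB⟩).symm

end Ballean

theorem stmt9_general {X Y : Type*} (d : X → X → ℝ) (ρ : Y → Y → ℝ)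
    (hd : ∀ x y, d x y ≤ 0 ↔ x = y) (hρ : ∀ x y, ρ x y ≤ 0 ↔ x = y)
    (hfind : ∀ A B : ballean d, (Icc A B).Finite) (hfinρ : ∀ A B : ballean ρ, (Icc A B).Finite) :
    (∃ F : Set X → Set Y, BijOn F {B | IsBall d B} {B | IsBall ρ B} ∧
        ∀ B₁ B₂ : Set X, IsBall d B₁ → IsBall d B₂ →
          (BallCovers d B₁ B₂ ↔ BallCovers ρ (F B₁) (F B₂))) ↔
      (∃ g : X → Y, Function.Bijective g ∧ IsBallPreserving d ρ g) := by
  constructor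
  · rintro ⟨F, hF, hcovers⟩
    let _ := LocallyFiniteOrder.ofFiniteIcc hfind
    let _ := LocallyFiniteOrder.ofFiniteIcc hfinρ
    let φ : ballean d ≃ ballean ρ := hF.equiv F
    have hφ (A B : ballean d) : A ⋖ B ↔ φ A ⋖ φ B := by
      rw [← ballCovers_iff_covBy, ← ballCovers_iff_covBy]
      exact hcovers A B A.2 B.2
    let e : ballean d ≃o ballean ρ := orderIsoOfCovByIff φ hφ
    let g : X ≃ Y := (isPointFamily_ballean hd).pointEquiv (isPointFamily_ballean hρ) e
    exact ⟨g, g.bijective, (isBallPreserving_iff_bijOn_image g.bijective).2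
      (IsPointFamily.bijOn_image_pointEquiv _ _ e)⟩
  · rintro ⟨g, hg, hpres⟩
    have hbij := (isBallPreserving_iff_bijOn_image hg).1 hpres
    exact ⟨image g, hbij, fun _ _ hA hB => (ballCovers_image_iff hg.1 hbij hA hB).symm⟩

/-- For finite nonempty semimetric spaces `X` and `Y`, the Hasse diagrams
of their balleans are isomorphic as directed graphs iff there exists a bijective
ball-preserving mapping `X → Y`. -/
theorem stmt9 {X Y : Type*} [Finite X] [Finite Y] [Nonempty X] [Nonempty Y]
    (d : X → X → ℝ) (ρ : Y → Y → ℝ) (hd : IsSemimetric d) (hρ : IsSemimetric ρ) :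
    (∃ F : Set X → Set Y, Set.BijOn F {B | IsBall d B} {B | IsBall ρ B} ∧
        ∀ B₁ B₂ : Set X, IsBall d B₁ → IsBall d B₂ →
          (BallCovers d B₁ B₂ ↔ BallCovers ρ (F B₁) (F B₂))) ↔
      (∃ g : X → Y, Function.Bijective g ∧ IsBallPreserving d ρ g) :=
  stmt9_general d ρ hd.nonpos_iff hρ.nonpos_iff (fun _ _ => toFinite _) fun _ _ => toFinite _
end
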